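/- Let p be a prime with p ≥ 5 and suppose 3 is a quadratic non-residue of p. If positive integers n, d, t satisfy 6p·n² + 6p(p−1)·n·d + p(p−1)(2p−1)·d² = 6t², and e denotes the common p-adic valuation of n and d, then 2·vₚ(t) > 2e + 1, where vₚ(t) is the p-adic valuation of t. -/

import Mathlib

/-!
Since `n` and `d` are both divisible by `p ^ e`, the left side of the equation, `p` times a
quadratic form in `n` and `d`, is divisible by `p ^ (2 * e + 1)`. As `6` is prime to `p`, this power
divides `t ^ 2`, whose valuation `2 * padicValNat p t` is even, so the bound `2 * e + 1` is strict.
-/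

theorem padic_val_t_gt (p : ℕ) (hp : p.Prime) (hp5 : 5 ≤ p)
    (h3 : ¬ ∃ x : ℤ, x ^ 2 ≡ 3 [ZMOD (p : ℤ)])
    (n d t : ℕ) (hn : 0 < n) (hd : 0 < d) (ht : 0 < t)
    (heq : 6 * p * n ^ 2 + 6 * p * (p - 1) * n * d + p * (p - 1) * (2 * p - 1) * d ^ 2
      = 6 * t ^ 2)
    (e : ℕ) (hen : padicValNat p n = e) (hed : padicValNat p d = e) :
    2 * padicValNat p t > 2 * e + 1 := by
  have := Fact.mk hp
  -- The left side of `heq` is `p` times a quadratic form in `n` and `d`, both multiples of `p ^ e`.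
  obtain ⟨a, ha⟩ : p ^ e ∣ n := hen ▸ pow_padicValNat_dvd
  obtain ⟨b, hb⟩ : p ^ e ∣ d := hed ▸ pow_padicValNat_dvd
  have hdvd : p ^ (2 * e + 1) ∣ 6 * t ^ 2 := by
    refine ⟨6 * a ^ 2 + 6 * (p - 1) * a * b + (p - 1) * (2 * p - 1) * b ^ 2, ?_⟩
    rw [← heq, ha, hb]
    ring
  -- As `p ≥ 5`, the factor `6` is prime to `p` and can be dropped.
  have hcop : Nat.Coprime p 6 := by
    rw [hp.coprime_iff_not_dvd]
    intro h
    have hle : p ≤ 6 := Nat.le_of_dvd (by norm_num) h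
    interval_cases p <;> revert hp h <;> norm_num
  have ht2 : p ^ (2 * e + 1) ∣ t ^ 2 := (hcop.pow_left _).dvd_of_dvd_mul_left hdvd
  rw [padicValNat_dvd_iff_le (by positivity), padicValNat.pow] at ht2
  -- Equality is excluded by parity.
  omega
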